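/- Let x̄ ∈ ℝ, σ > 0 and t > 0, and let P_t : ℝ → ℝ be defined by P_t(x) = t·sgn(x) if |x| > t and P_t(x) = x if |x| ≤ t. Set a₁ = (t + x̄)/(√2·σ) and a₂ = (t − x̄)/(√2·σ). Then (1/(√(2π)·σ)) ∫_{−∞}^{∞} x·P_t(x) · exp(−(x − x̄)²/(2σ²)) dx = ((t/2)·√(2/π)·σ + √(2/π)·σ·x̄ − (σ²/√π)·a₁)·exp(−a₁²) + ((t/2)·√(2/π)·σ − √(2/π)·σ·x̄ − (σ²/√π)·a₂)·exp(−a₂²) + (1/2)(σ² + x̄² + t·x̄)·erf(a₁) + (1/2)(σ² + x̄² − t·x̄)·erf(a₂), where erf(z) = (2/√π) ∫₀^z exp(−u²) du. -/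

import Mathlib

open MeasureTheory

/-- The error function `erf(z) = (2/√π) ∫₀^z exp(−u²) du`. -/
noncomputable def erf (z : ℝ) : ℝ :=
  (2 / Real.sqrt Real.pi) * ∫ u in (0:ℝ)..z, Real.exp (-u ^ 2)

/-- The clipping function `P_t(x) = t·sgn(x)` if `|x| > t`, `P_t(x) = x` if `|x| ≤ t`. -/
noncomputable def clip (t x : ℝ) : ℝ := if |x| ≤ t then x else t * Real.sign x

/-!
Let `p` be the density of `N(m, v)`. Splitting the line at `±t` reduces the mean of `x * clip t x`
to the first moments of `p` on the two tails and to its second moment on `[-t, t]`. Since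
`v * p' x = -(x - m) * p x`, the functions `x * p x` and `x ^ 2 * p x` have primitives which are
combinations of `p` and of `Φ x = erf ((x - m) / √(2 * v)) / 2`. In the sum the boundary terms
collapse to `v * m * (p (-t) - p t)`.
-/

open Set Filter Topology ProbabilityTheory
open scoped NNReal

theorem hasDerivAt_erf (z : ℝ) : HasDerivAt erf (2 / √Real.pi * Real.exp (-z ^ 2)) z := by
  have hcont : Continuous fun u : ℝ => Real.exp (-u ^ 2) := by fun_prop
  exact (hcont.integral_hasStrictDerivAt 0 z).hasDerivAt.const_mul _

theorem erf_neg (z : ℝ) : erf (-z) = -erf z := by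
  have h := intervalIntegral.integral_comp_neg (a := 0) (b := z) fun u : ℝ => Real.exp (-u ^ 2)
  simp only [neg_sq, neg_zero] at h
  rw [erf, erf, h, intervalIntegral.integral_symm, mul_neg]

theorem tendsto_erf_atTop : Tendsto erf atTop (𝓝 1) := by
  have hint : Integrable fun u : ℝ => Real.exp (-u ^ 2) := by
    simpa using integrable_exp_neg_mul_sq one_pos
  have hval : ∫ u in Ioi (0 : ℝ), Real.exp (-u ^ 2) = √Real.pi / 2 := by
    simpa using integral_gaussian_Ioi 1
  have hlim := (intervalIntegral_tendsto_integral_Ioi 0 hint.integrableOn tendsto_id).const_mul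
    (2 / √Real.pi)
  rwa [hval, div_mul_div_cancel₀' two_ne_zero, div_self (by positivity)] at hlim

theorem tendsto_erf_atBot : Tendsto erf atBot (𝓝 (-1)) := by
  refine (tendsto_erf_atTop.comp tendsto_neg_atBot_atTop).neg.congr fun z => ?_
  rw [Function.comp_apply, erf_neg, neg_neg]

section GaussianMoments

/-- The distribution function of `N(m, v)` minus `1 / 2`, that is, the primitive of the density
that vanishes at `m`. The shift makes its limits at `±∞` equal to `±1 / 2`, so that the moment
formulas inherit the symmetry of `erf`. -/
noncomputable def centeredGaussianCDF (m : ℝ) (v : ℝ≥0) (x : ℝ) : ℝ :=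
  erf ((x - m) / √(2 * v)) / 2

theorem gaussianPDFReal_sq (m : ℝ) (σ : ℝ≥0) (x : ℝ) :
    gaussianPDFReal m (σ ^ 2) x =
      1 / (√(2 * Real.pi) * σ) * Real.exp (-((x - m) / (√2 * σ)) ^ 2) := by
  rw [gaussianPDFReal, NNReal.coe_pow, Real.sqrt_mul (by positivity), Real.sqrt_sq σ.coe_nonneg,
    div_pow, mul_pow, Real.sq_sqrt zero_le_two, one_div, neg_div]

theorem centeredGaussianCDF_sq (m : ℝ) (σ : ℝ≥0) (x : ℝ) :
    centeredGaussianCDF m (σ ^ 2) x = erf ((x - m) / (√2 * σ)) / 2 := by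
  rw [centeredGaussianCDF, NNReal.coe_pow, Real.sqrt_mul zero_le_two, Real.sqrt_sq σ.coe_nonneg]

variable {m : ℝ} {v : ℝ≥0}

theorem hasDerivAt_centeredGaussianCDF (x : ℝ) :
    HasDerivAt (centeredGaussianCDF m v) (gaussianPDFReal m v x) x := by
  have hz : HasDerivAt (fun x => (x - m) / √(2 * v)) (1 / √(2 * v)) x :=
    ((hasDerivAt_id x).sub_const m).div_const _
  refine (((hasDerivAt_erf _).comp x hz).div_const 2).congr_deriv ?_
  have hsqrt : √(2 * Real.pi * v) = √Real.pi * √(2 * v) := by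
    rw [← Real.sqrt_mul Real.pi_pos.le]
    ring_nf
  rw [gaussianPDFReal, hsqrt, div_pow, Real.sq_sqrt (by positivity), ← neg_div]
  ring

theorem hasDerivAt_gaussianPDFReal (x : ℝ) :
    HasDerivAt (gaussianPDFReal m v) (-((x - m) / v * gaussianPDFReal m v x)) x := by
  have hexponent : HasDerivAt (fun x => -(x - m) ^ 2 / (2 * v)) (-((x - m) / v)) x := by
    refine ((((hasDerivAt_id x).sub_const m).pow 2).neg.div_const _).congr_deriv ?_
    simp only [id_eq]
    ring
  refine (hexponent.exp.const_mul _).congr_deriv ?_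
  rw [gaussianPDFReal]
  ring

theorem tendsto_centeredGaussianCDF_atTop (hv : v ≠ 0) :
    Tendsto (centeredGaussianCDF m v) atTop (𝓝 (1 / 2)) :=
  (tendsto_erf_atTop.comp
    ((tendsto_atTop_add_const_right _ (-m) tendsto_id).atTop_div_const (by positivity))).div_const 2

theorem tendsto_centeredGaussianCDF_atBot (hv : v ≠ 0) :
    Tendsto (centeredGaussianCDF m v) atBot (𝓝 (-1 / 2)) :=
  (tendsto_erf_atBot.comp
    ((tendsto_atBot_add_const_right _ (-m) tendsto_id).atBot_div_const (by positivity))).div_const 2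

theorem integrable_mul_gaussianPDFReal (hv : v ≠ 0) :
    Integrable fun x => x * gaussianPDFReal m v x := by
  have hid : Integrable id (gaussianReal m v) :=
    (memLp_id_gaussianReal' 1 ENNReal.one_ne_top).integrable le_rfl
  rw [gaussianReal_of_var_ne_zero m hv, integrable_withDensity_iff (measurable_gaussianPDF m v)
    (ae_of_all _ fun _ => gaussianPDF_lt_top)] at hid
  simpa only [toReal_gaussianPDF, id_eq] using hid

theorem integrable_deriv_gaussianPDFReal (hv : v ≠ 0) :
    Integrable fun x => -((x - m) / v * gaussianPDFReal m v x) := by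
  have hcentered := (integrable_mul_gaussianPDFReal (m := m) hv).sub
    ((integrable_gaussianPDFReal m v).const_mul m)
  refine (hcentered.div_const v).neg.congr (ae_of_all _ fun x => ?_)
  simp only [Pi.neg_apply, Pi.sub_apply]
  ring

theorem tendsto_gaussianPDFReal_atTop (hv : v ≠ 0) :
    Tendsto (gaussianPDFReal m v) atTop (𝓝 0) :=
  tendsto_zero_of_hasDerivAt_of_integrableOn_Ioi (a := 0)
    (fun x _ => hasDerivAt_gaussianPDFReal x)
    (integrable_deriv_gaussianPDFReal hv).integrableOn
    (integrable_gaussianPDFReal m v).integrableOn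

theorem tendsto_gaussianPDFReal_atBot (hv : v ≠ 0) :
    Tendsto (gaussianPDFReal m v) atBot (𝓝 0) :=
  tendsto_zero_of_hasDerivAt_of_integrableOn_Iic (a := 0)
    (fun x _ => hasDerivAt_gaussianPDFReal x)
    (integrable_deriv_gaussianPDFReal hv).integrableOn
    (integrable_gaussianPDFReal m v).integrableOn

theorem hasDerivAt_gaussian_firstMoment (hv : v ≠ 0) (x : ℝ) :
    HasDerivAt (fun x => m * centeredGaussianCDF m v x - v * gaussianPDFReal m v x)
      (x * gaussianPDFReal m v x) x := by
  refine (((hasDerivAt_centeredGaussianCDF x).const_mul m).sub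
    ((hasDerivAt_gaussianPDFReal x).const_mul (v : ℝ))).congr_deriv ?_
  field_simp
  ring

theorem hasDerivAt_gaussian_secondMoment (hv : v ≠ 0) (x : ℝ) :
    HasDerivAt
      (fun x => (v + m ^ 2) * centeredGaussianCDF m v x - v * ((x + m) * gaussianPDFReal m v x))
      (x * (x * gaussianPDFReal m v x)) x := by
  refine (((hasDerivAt_centeredGaussianCDF x).const_mul (v + m ^ 2)).sub
    ((((hasDerivAt_id x).add_const m).mul (hasDerivAt_gaussianPDFReal x)).const_mul
      (v : ℝ))).congr_deriv ?_
  simp only [id_eq]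
  field_simp
  ring

theorem integral_Ioi_mul_gaussianPDFReal (hv : v ≠ 0) (a : ℝ) :
    ∫ x in Ioi a, x * gaussianPDFReal m v x =
      m * (1 / 2 - centeredGaussianCDF m v a) + v * gaussianPDFReal m v a := by
  have hlim := ((tendsto_centeredGaussianCDF_atTop (m := m) hv).const_mul m).sub
    ((tendsto_gaussianPDFReal_atTop (m := m) hv).const_mul (v : ℝ))
  rw [integral_Ioi_of_hasDerivAt_of_tendsto' (fun x _ => hasDerivAt_gaussian_firstMoment hv x)
    (integrable_mul_gaussianPDFReal hv).integrableOn hlim]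
  ring

theorem integral_Iic_mul_gaussianPDFReal (hv : v ≠ 0) (a : ℝ) :
    ∫ x in Iic a, x * gaussianPDFReal m v x =
      m * (1 / 2 + centeredGaussianCDF m v a) - v * gaussianPDFReal m v a := by
  have hlim := ((tendsto_centeredGaussianCDF_atBot (m := m) hv).const_mul m).sub
    ((tendsto_gaussianPDFReal_atBot (m := m) hv).const_mul (v : ℝ))
  rw [integral_Iic_of_hasDerivAt_of_tendsto' (fun x _ => hasDerivAt_gaussian_firstMoment hv x)
    (integrable_mul_gaussianPDFReal hv).integrableOn hlim]
  ring

theorem intervalIntegral_mul_mul_gaussianPDFReal (hv : v ≠ 0) (a b : ℝ) :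
    ∫ x in a..b, x * (x * gaussianPDFReal m v x) =
      (v + m ^ 2) * (centeredGaussianCDF m v b - centeredGaussianCDF m v a) -
        v * ((b + m) * gaussianPDFReal m v b - (a + m) * gaussianPDFReal m v a) := by
  rw [intervalIntegral.integral_eq_sub_of_hasDerivAt
    (fun x _ => hasDerivAt_gaussian_secondMoment hv x)
    ((integrable_mul_gaussianPDFReal hv).intervalIntegrable.continuousOn_mul continuousOn_id)]
  ring

end GaussianMoments

section Clip

variable {t x : ℝ}

theorem clip_of_abs_le (h : |x| ≤ t) : clip t x = x :=
  if_pos h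

theorem clip_of_lt (ht : 0 ≤ t) (h : t < x) : clip t x = t := by
  have hx : 0 < x := ht.trans_lt h
  rw [clip, if_neg (by rwa [abs_of_pos hx, not_le]), Real.sign_of_pos hx, mul_one]

theorem clip_neg (t x : ℝ) : clip t (-x) = -clip t x := by
  simp only [clip, abs_neg, Real.sign_neg, mul_neg]
  split_ifs <;> rfl

theorem clip_eq_max_min (ht : 0 ≤ t) (x : ℝ) : clip t x = max (-t) (min x t) := by
  rcases le_or_gt |x| t with hx | hx
  · rw [clip_of_abs_le hx, min_eq_left (abs_le.1 hx).2, max_eq_right (abs_le.1 hx).1]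
  rcases lt_abs.1 hx with hx | hx
  · rw [clip_of_lt ht hx, min_eq_right hx.le, max_eq_right (neg_le_self ht)]
  · rw [← neg_neg x, clip_neg, clip_of_lt ht hx, neg_neg, min_eq_left (by linarith),
      max_eq_left (by linarith)]

theorem integral_clip_mul {μ : Measure ℝ} {f : ℝ → ℝ} (ht : 0 ≤ t) (hf : Integrable f μ) :
    ∫ x, clip t x * f x ∂μ =
      -t * (∫ x in Iic (-t), f x ∂μ) + (∫ x in -t..t, x * f x ∂μ) + t * ∫ x in Ioi t, f x ∂μ := by
  have htt : -t ≤ t := neg_le_self ht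
  simp only [clip_eq_max_min ht]
  have hint : Integrable (fun x => max (-t) (min x t) * f x) μ := by
    refine hf.bdd_mul (c := t) (by fun_prop) (ae_of_all _ fun x => ?_)
    exact abs_le.2 ⟨le_max_left _ _, max_le htt (min_le_right _ _)⟩
  have hlow : ∫ x in Iic (-t), max (-t) (min x t) * f x ∂μ = -t * ∫ x in Iic (-t), f x ∂μ := by
    rw [← integral_const_mul]
    refine setIntegral_congr_fun measurableSet_Iic fun x hx => ?_
    simp only [max_eq_left ((min_le_left x t).trans hx)]
  have hmid : ∫ x in -t..t, max (-t) (min x t) * f x ∂μ = ∫ x in -t..t, x * f x ∂μ := by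
    refine intervalIntegral.integral_congr fun x hx => ?_
    rw [uIcc_of_le htt] at hx
    simp only [min_eq_left hx.2, max_eq_right hx.1]
  have hhigh : ∫ x in Ioi t, max (-t) (min x t) * f x ∂μ = t * ∫ x in Ioi t, f x ∂μ := by
    rw [← integral_const_mul]
    refine setIntegral_congr_fun measurableSet_Ioi fun x hx => ?_
    simp only [min_eq_right (mem_Ioi.1 hx).le, max_eq_right htt]
  rw [← intervalIntegral.integral_Iic_add_Ioi (b := -t) hint.integrableOn hint.integrableOn,
    ← intervalIntegral.integral_interval_add_Ioi (b := t) hint.integrableOn hint.integrableOn,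
    hlow, hmid, hhigh, add_assoc]

end Clip

theorem integral_clip_mul_gaussianPDFReal {m t : ℝ} {v : ℝ≥0} (hv : v ≠ 0) (ht : 0 ≤ t) :
    ∫ x, clip t x * (x * gaussianPDFReal m v x) =
      v * m * (gaussianPDFReal m v (-t) - gaussianPDFReal m v t) +
        (v + m ^ 2 - t * m) * centeredGaussianCDF m v t -
        (v + m ^ 2 + t * m) * centeredGaussianCDF m v (-t) := by
  rw [integral_clip_mul ht (integrable_mul_gaussianPDFReal hv),
    integral_Iic_mul_gaussianPDFReal hv, intervalIntegral_mul_mul_gaussianPDFReal hv,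
    integral_Ioi_mul_gaussianPDFReal hv]
  ring

-- With `y = ±xbar` this is the coefficient of `exp (-a₁ ^ 2)`, respectively of `exp (-a₂ ^ 2)`.
theorem boundary_coefficient_eq (t y : ℝ) {σ : ℝ} (hσ : σ ≠ 0) :
    t / 2 * √(2 / Real.pi) * σ + √(2 / Real.pi) * σ * y -
      σ ^ 2 / √Real.pi * ((t + y) / (√2 * σ)) = σ * y / √(2 * Real.pi) := by
  rw [Real.sqrt_div zero_le_two, Real.sqrt_mul zero_le_two]
  field_simp
  rw [Real.sq_sqrt zero_le_two]
  ring

/-- the Gaussian mean of `x·P_t(x)`, with `a₁ = (t + x̄)/(√2σ)`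
and `a₂ = (t − x̄)/(√2σ)`. -/
theorem gaussian_mean_x_clip (xbar σ t : ℝ) (hσ : 0 < σ) (ht : 0 < t)
    (a₁ a₂ : ℝ) (ha₁ : a₁ = (t + xbar) / (Real.sqrt 2 * σ))
    (ha₂ : a₂ = (t - xbar) / (Real.sqrt 2 * σ)) :
    (1 / (Real.sqrt (2 * Real.pi) * σ)) *
        ∫ x : ℝ, x * clip t x * Real.exp (-(x - xbar) ^ 2 / (2 * σ ^ 2)) =
      ((t / 2) * Real.sqrt (2 / Real.pi) * σ + Real.sqrt (2 / Real.pi) * σ * xbar -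
            (σ ^ 2 / Real.sqrt Real.pi) * a₁) * Real.exp (-a₁ ^ 2) +
        ((t / 2) * Real.sqrt (2 / Real.pi) * σ - Real.sqrt (2 / Real.pi) * σ * xbar -
            (σ ^ 2 / Real.sqrt Real.pi) * a₂) * Real.exp (-a₂ ^ 2) +
        (1 / 2) * (σ ^ 2 + xbar ^ 2 + t * xbar) * erf a₁ +
        (1 / 2) * (σ ^ 2 + xbar ^ 2 - t * xbar) * erf a₂ := by
  lift σ to ℝ≥0 using hσ.le
  have hv : σ ^ 2 ≠ 0 := pow_ne_zero 2 (NNReal.coe_ne_zero.1 hσ.ne')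
  have hmean : 1 / (√(2 * Real.pi) * σ) *
        ∫ x : ℝ, x * clip t x * Real.exp (-(x - xbar) ^ 2 / (2 * σ ^ 2)) =
      ∫ x, clip t x * (x * gaussianPDFReal xbar (σ ^ 2) x) := by
    rw [← integral_const_mul]
    refine integral_congr_ae (ae_of_all _ fun x => ?_)
    simp only [gaussianPDFReal_sq, div_pow, mul_pow, Real.sq_sqrt zero_le_two, neg_div]
    ring
  have hlow : (-t - xbar) / (√2 * σ) = -a₁ := by rw [ha₁]; ring
  have hcoef₁ := boundary_coefficient_eq t xbar hσ.ne'
  have hcoef₂ := boundary_coefficient_eq t (-xbar) hσ.ne'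
  rw [← ha₁] at hcoef₁
  rw [mul_neg, ← sub_eq_add_neg, ← sub_eq_add_neg, ← ha₂] at hcoef₂
  rw [hmean, integral_clip_mul_gaussianPDFReal hv ht.le, hcoef₁, hcoef₂]
  simp only [gaussianPDFReal_sq, centeredGaussianCDF_sq, hlow, ← ha₂, erf_neg, neg_sq,
    NNReal.coe_pow]
  field_simp
  ring
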